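/- arXiv:1905.08445 — 2 statements merged into one kernel-verified Lean document; each statement's English description precedes it below -/
import Mathlib

section
/- Under Assumption H1 and the Bregman setting with 0 < ε < m/L, for every x ∈ ℝ^n and every t ∈ T(x) one has the descent estimates F(t) ≤ E(x) − (1/2)(m/ε − L)‖x − t‖² and F(t) ≤ F(x) − (1/2)(m/ε − L)‖x − t‖², where moreover E(x) = F(x) − ε·G(x). -/
open Set Metric Filter Topology
open scoped RealInnerProductSpace

noncomputable section

variable {E : Type*} [NormedAddCommGroup E] [InnerProductSpace ℝ E] [FiniteDimensional ℝ E]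

/-- The Bregman distance generated by `K` (with gradient `K'`). -/
def bregD (K : E → ℝ) (K' : E → E) (x y : E) : ℝ := K y - K x - ⟪K' x, y - x⟫

/-- The Bregman proximal mapping: the set of global minimizers of
`y ↦ ⟪∇f x, y - x⟫ + g y + D(x,y)/ε`. -/
def bregT (f' : E → E) (g : E → ℝ) (K : E → ℝ) (K' : E → E) (ε : ℝ) (x : E) : Set E :=
  {y | ∀ z, ⟪f' x, y - x⟫ + g y + bregD K K' x y / ε ≤ ⟪f' x, z - x⟫ + g z + bregD K K' x z / ε}

/-- The Bregman proximal envelope. -/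
def bregEnv (f : E → ℝ) (f' : E → E) (g : E → ℝ) (K : E → ℝ) (K' : E → E) (ε : ℝ) (x : E) : ℝ :=
  ⨅ y : E, (f x + ⟪f' x, y - x⟫ + g y + bregD K K' x y / ε)

theorem descent_aux (f : E → ℝ) (f' : E → E) (L : ℝ)
    (hf : ∀ x, HasGradientAt f (f' x) x)
    (hlip : ∀ x y, ‖f' x - f' y‖ ≤ L * ‖x - y‖) (x t : E) :
    f t ≤ f x + ⟪f' x, t - x⟫ + L / 2 * ‖t - x‖ ^ 2 := by
  set v := t - x with hv
  have hd : ∀ s : ℝ, HasDerivAt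
      (fun s : ℝ => f (x + s • v) - s * ⟪f' x, v⟫ - s ^ 2 * (L / 2 * ‖v‖ ^ 2))
      (⟪f' (x + s • v), v⟫ - 1 * ⟪f' x, v⟫ - (2 * s) * (L / 2 * ‖v‖ ^ 2)) s := by
    intro s
    have h1 : HasDerivAt (fun s : ℝ => x + s • v) v s := by
      simpa using ((hasDerivAt_id s).smul_const v).const_add x
    have h2 := (hf (x + s • v)).hasFDerivAt.comp_hasDerivAt s h1
    have h3 : HasDerivAt (fun s : ℝ => f (x + s • v)) ⟪f' (x + s • v), v⟫ s := by
      simpa [Function.comp_def] using h2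
    have h4 : HasDerivAt (fun s : ℝ => s ^ 2) (2 * s) s := by
      simpa using hasDerivAt_pow 2 s
    exact (h3.sub ((hasDerivAt_id s).mul_const _)).sub (h4.mul_const _)
  have hanti := antitoneOn_of_deriv_nonpos (convex_Icc (0:ℝ) 1)
    (fun s _ => (hd s).continuousAt.continuousWithinAt)
    (fun s _ => (hd s).differentiableAt.differentiableWithinAt)
    (by
      intro s hs
      rw [interior_Icc] at hs
      rw [(hd s).deriv]
      have h1 : ⟪f' (x + s • v) - f' x, v⟫ ≤ ‖f' (x + s • v) - f' x‖ * ‖v‖ :=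
        real_inner_le_norm _ _
      have h2 := hlip (x + s • v) x
      rw [add_sub_cancel_left, norm_smul, Real.norm_eq_abs, abs_of_pos hs.1] at h2
      have h3 := mul_le_mul_of_nonneg_right h2 (norm_nonneg v)
      rw [inner_sub_left] at h1
      nlinarith)
  have h := hanti (left_mem_Icc.2 zero_le_one) (right_mem_Icc.2 zero_le_one) zero_le_one
  have e : x + v = t := by rw [hv]; abel
  simp only [one_smul, zero_smul, add_zero, e] at h
  linarith

/-- Descent estimates for the Bregman proximal mapping, together with
`E(x) = F(x) - ε·G(x)` where `G = (F - E)/ε`. -/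
theorem stmt3
    (f g : E → ℝ) (f' : E → E) (L : ℝ)
    (hL : 0 < L)
    (hf : ∀ x, HasGradientAt f (f' x) x)
    (hlip : ∀ x y, ‖f' x - f' y‖ ≤ L * ‖x - y‖)
    (hg : Continuous g)
    (hlevel : ∀ r : ℝ, Bornology.IsBounded {x : E | f x + g x ≤ r})
    (K : E → ℝ) (K' : E → E) (m M : ℝ)
    (hm : 0 < m) (hmM : m ≤ M)
    (hK : ∀ x, HasGradientAt K (K' x) x)
    (hKstrong : ∀ x y : E, K x + ⟪K' x, y - x⟫ + m / 2 * ‖y - x‖ ^ 2 ≤ K y)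
    (hKlip : ∀ x y, ‖K' x - K' y‖ ≤ M * ‖x - y‖)
    (ε : ℝ) (hε : 0 < ε)
    (hεL : ε * L < m) :
    ∀ x : E, ∀ t ∈ bregT f' g K K' ε x,
      (f t + g t ≤ bregEnv f f' g K K' ε x - 1 / 2 * (m / ε - L) * ‖x - t‖ ^ 2) ∧
      (f t + g t ≤ (f x + g x) - 1 / 2 * (m / ε - L) * ‖x - t‖ ^ 2) ∧
      bregEnv f f' g K K' ε x =
        (f x + g x) - ε * (((f x + g x) - bregEnv f f' g K K' ε x) / ε) := by
  intro x t ht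
  have hdesc := descent_aux f f' L hf hlip x t
  have hT : ∀ z, ⟪f' x, t - x⟫ + g t + bregD K K' x t / ε
      ≤ ⟪f' x, z - x⟫ + g z + bregD K K' x z / ε := ht
  have hD : m / 2 * ‖t - x‖ ^ 2 ≤ bregD K K' x t := by
    have := hKstrong x t
    unfold bregD
    linarith
  have hDε : m / 2 * ‖t - x‖ ^ 2 / ε ≤ bregD K K' x t / ε :=
    div_le_div_of_nonneg_right hD hε.le
  have hDε' : m / 2 * ‖t - x‖ ^ 2 / ε = 1 / 2 * (m / ε) * ‖t - x‖ ^ 2 := by ring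
  have hkey : ∀ z, f t + g t + 1 / 2 * (m / ε - L) * ‖x - t‖ ^ 2
      ≤ f x + ⟪f' x, z - x⟫ + g z + bregD K K' x z / ε := by
    intro z
    have := hT z
    rw [norm_sub_rev x t]
    linarith
  refine ⟨?_, ?_, ?_⟩
  · have : f t + g t + 1 / 2 * (m / ε - L) * ‖x - t‖ ^ 2 ≤ bregEnv f f' g K K' ε x :=
      le_ciInf hkey
    linarith
  · have := hkey x
    simp [bregD] at this
    linarith
  · rw [mul_div_cancel₀ _ hε.ne']
    ring
end
end

section
/- Level-set subdifferential error bound implies level-set Bregman proximal error bound: under Assumption H1 and the Bregman setting with 0 < ε < m/L, suppose there exist η, ν, c₃ > 0 and γ > 0 such that infDist(x, [F ≤ F̄])^γ ≤ c₃·‖ξ‖ for every x ∈ 𝔅(x̄;η,ν) and every ξ ∈ ∂_P F(x). Then there exist N > (2εν/(m − εL))/(η/2)² and θ > 0 such that for all x ∈ 𝔅(x̄; η/2, ν/N), infDist(x, [F ≤ F̄])^p ≤ θ · infDist(x, T(x)), where p = max{γ, 1}. -/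
open Set Metric Filter Topology
open scoped RealInnerProductSpace

noncomputable section

variable {E : Type*} [NormedAddCommGroup E] [InnerProductSpace ℝ E] [FiniteDimensional ℝ E]

/-- The proximal subdifferential of `ψ` at `x`. -/
def proxSubdiff (ψ : E → ℝ) (x : E) : Set E :=
  {ξ | ∃ ρ > (0:ℝ), ∃ η > (0:ℝ), ∀ y, ‖y - x‖ < η →
    ψ y ≥ ψ x + ⟪ξ, y - x⟫ - ρ * ‖y - x‖ ^ 2}

theorem aux_descent (f : E → ℝ) (f' : E → E) (L : ℝ)
    (hf : ∀ x, HasGradientAt f (f' x) x)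
    (hlip : ∀ x y, ‖f' x - f' y‖ ≤ L * ‖x - y‖) (x y : E) :
    f y ≤ f x + ⟪f' x, y - x⟫ + L / 2 * ‖y - x‖ ^ 2 := by
  obtain ⟨v, hv⟩ : ∃ v, v = y - x := ⟨_, rfl⟩
  have hd : ∀ t : ℝ, HasDerivAt
      (fun t : ℝ => f (x + t • v) - t * ⟪f' x, v⟫ - L / 2 * ‖v‖ ^ 2 * t ^ 2)
      (⟪f' (x + t • v), v⟫ - ⟪f' x, v⟫ - L / 2 * ‖v‖ ^ 2 * (2 * t)) t := by
    intro t
    have h1 : HasDerivAt (fun t : ℝ => x + t • v) v t := by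
      simpa using ((hasDerivAt_id t).smul_const v).const_add x
    have h2 : HasDerivAt (fun t : ℝ => f (x + t • v)) ⟪f' (x + t • v), v⟫ t := by
      have := (hf (x + t • v)).hasFDerivAt.comp_hasDerivAt t h1
      rw [InnerProductSpace.toDual_apply_apply] at this
      exact this
    have h3 : HasDerivAt (fun t : ℝ => t * ⟪f' x, v⟫) ⟪f' x, v⟫ t := by
      simpa using (hasDerivAt_id t).mul_const ⟪f' x, v⟫
    have h4 : HasDerivAt (fun t : ℝ => L / 2 * ‖v‖ ^ 2 * t ^ 2) (L / 2 * ‖v‖ ^ 2 * (2 * t)) t := by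
      simpa using (hasDerivAt_pow 2 t).const_mul (L / 2 * ‖v‖ ^ 2)
    exact (h2.sub h3).sub h4
  have hanti := antitoneOn_of_deriv_nonpos (convex_Icc (0:ℝ) 1)
    (fun t _ => (hd t).continuousAt.continuousWithinAt)
    (fun t _ => (hd t).differentiableAt.differentiableWithinAt)
    (by
      intro t ht
      rw [interior_Icc] at ht
      rw [(hd t).deriv, ← inner_sub_left]
      have h1 := real_inner_le_norm (f' (x + t • v) - f' x) v
      have h2 := hlip (x + t • v) x
      rw [add_sub_cancel_left, norm_smul, Real.norm_of_nonneg ht.1.le] at h2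
      have h3 := mul_le_mul_of_nonneg_right h2 (norm_nonneg v)
      nlinarith)
  have := hanti (left_mem_Icc.2 zero_le_one) (right_mem_Icc.2 zero_le_one) zero_le_one
  have hxy : x + v = y := by rw [hv]; abel
  simp [hxy] at this
  rw [← hv]
  linarith

theorem aux_descent_lower (f : E → ℝ) (f' : E → E) (L : ℝ)
    (hf : ∀ x, HasGradientAt f (f' x) x)
    (hlip : ∀ x y, ‖f' x - f' y‖ ≤ L * ‖x - y‖) (x y : E) :
    f x + ⟪f' x, y - x⟫ - L / 2 * ‖y - x‖ ^ 2 ≤ f y := by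
  have := aux_descent (fun z => - f z) (fun z => - f' z) L
    (fun z => by
      have h := (hf z).hasFDerivAt.neg
      rw [hasGradientAt_iff_hasFDerivAt, map_neg]
      exact h)
    (fun a b => by
      have := hlip a b
      rwa [← norm_neg, show -(-f' a - -f' b) = f' a - f' b by abel]) x y
  rw [inner_neg_left] at this
  linarith

theorem aux_real (r d s η γ C : ℝ) (hr : 0 ≤ r) (hd : 0 ≤ d) (hs : 0 ≤ s) (hrη : r ≤ η)
    (hdη : d ≤ η) (hη : 0 < η) (hγ : 0 < γ) (hC : 0 ≤ C)
    (hrd : r ^ γ ≤ C * d) (hsr : s ≤ r + d) :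
    s ^ (max γ 1) ≤ (2 ^ (max γ 1) * (η ^ (max γ 1 - γ) * C + η ^ (max γ 1 - 1))) * d := by
  set p := max γ 1
  have hp1 : 1 ≤ p := le_max_right _ _
  have hpγ : γ ≤ p := le_max_left _ _
  have key : ∀ u q : ℝ, 0 ≤ u → u ≤ η → 0 < q → q ≤ p → u ^ p ≤ η ^ (p - q) * u ^ q := by
    intro u q hu huη hq hqp
    have : u ^ p = u ^ (p - q) * u ^ q := by
      rw [← Real.rpow_add_of_nonneg hu (by linarith) hq.le]; congr 1; ring
    rw [this]
    exact mul_le_mul_of_nonneg_right (Real.rpow_le_rpow hu huη (by linarith))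
      (Real.rpow_nonneg hu _)
  have h1 : r ^ p ≤ η ^ (p - γ) * (C * d) := (key r γ hr hrη hγ hpγ).trans
    (mul_le_mul_of_nonneg_left hrd (Real.rpow_nonneg hη.le _))
  have h2 : d ^ p ≤ η ^ (p - 1) * d := by
    simpa using key d 1 hd hdη one_pos hp1
  have h3 : (max r d) ^ p ≤ r ^ p + d ^ p := by
    have := Real.rpow_nonneg hr p
    have := Real.rpow_nonneg hd p
    rcases max_choice r d with h | h <;> rw [h] <;> linarith
  have h4 : s ≤ 2 * max r d := by
    have := le_max_left r d
    have := le_max_right r d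
    linarith
  calc s ^ p ≤ (2 * max r d) ^ p := Real.rpow_le_rpow hs h4 (by linarith)
    _ = 2 ^ p * (max r d) ^ p := Real.mul_rpow (by norm_num) (le_max_of_le_left hr)
    _ ≤ 2 ^ p * (η ^ (p - γ) * (C * d) + η ^ (p - 1) * d) :=
      mul_le_mul_of_nonneg_left (by linarith) (by positivity)
    _ = _ := by ring

/-- Level-set subdifferential error bound implies level-set Bregman proximal error bound,
with exponent `p = max γ 1`. -/
theorem stmt9
    (f g : E → ℝ) (f' : E → E) (L : ℝ)
    (hL : 0 < L)
    (hf : ∀ x, HasGradientAt f (f' x) x)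
    (hlip : ∀ x y, ‖f' x - f' y‖ ≤ L * ‖x - y‖)
    (hg : Continuous g)
    (hlevel : ∀ r : ℝ, Bornology.IsBounded {x : E | f x + g x ≤ r})
    (K : E → ℝ) (K' : E → E) (m M : ℝ)
    (hm : 0 < m) (hmM : m ≤ M)
    (hK : ∀ x, HasGradientAt K (K' x) x)
    (hKstrong : ∀ x y : E, K x + ⟪K' x, y - x⟫ + m / 2 * ‖y - x‖ ^ 2 ≤ K y)
    (hKlip : ∀ x y, ‖K' x - K' y‖ ≤ M * ‖x - y‖)
    (ε : ℝ) (hε : 0 < ε)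
    (hεL : ε * L < m)
    (xbar : E) (γ η ν c₃ : ℝ)
    (hγ : 0 < γ) (hη : 0 < η) (hν : 0 < ν) (hc₃ : 0 < c₃)
    (hEB : ∀ y : E, ‖y - xbar‖ < η → f xbar + g xbar < f y + g y →
      f y + g y < f xbar + g xbar + ν →
      ∀ ξ ∈ proxSubdiff (fun z => f z + g z) y,
        Metric.infDist y {z : E | f z + g z ≤ f xbar + g xbar} ^ γ ≤ c₃ * ‖ξ‖) :
    ∃ N θ : ℝ, N > (2 * ε * ν / (m - ε * L)) / (η / 2) ^ 2 ∧ 0 < θ ∧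
      ∀ y : E, ‖y - xbar‖ < η / 2 → f xbar + g xbar < f y + g y →
        f y + g y < f xbar + g xbar + ν / N →
        Metric.infDist y {z : E | f z + g z ≤ f xbar + g xbar} ^ (max γ 1) ≤
          θ * Metric.infDist y (bregT f' g K K' ε y) := by
  set a := (m - ε * L) / (2 * ε) with ha_def
  have ha : 0 < a := div_pos (by linarith) (by linarith)
  have hM : 0 < M := lt_of_lt_of_le hm hmM
  have hfc : Continuous f := continuous_iff_continuousAt.2 fun x =>
    (hf x).hasFDerivAt.continuousAt
  have hKc : Continuous K := continuous_iff_continuousAt.2 fun x =>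
    (hK x).hasFDerivAt.continuousAt
  have hdesc := aux_descent f f' L hf hlip
  have hlow := aux_descent_lower f f' L hf hlip
  have hKdesc := aux_descent K K' M hK hKlip
  have hmaj : ∀ y z : E, f z + g z + a * ‖z - y‖ ^ 2 ≤
      f y + (⟪f' y, z - y⟫ + g z + bregD K K' y z / ε) := by
    intro y z
    have h1 := hdesc y z
    have h2 := hKstrong y z
    have h3 : m / 2 * ‖z - y‖ ^ 2 / ε ≤ bregD K K' y z / ε := by
      apply div_le_div_of_nonneg_right _ hε.le
      unfold bregD
      linarith
    have h4 : a * ‖z - y‖ ^ 2 = m / 2 * ‖z - y‖ ^ 2 / ε - L / 2 * ‖z - y‖ ^ 2 := by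
      rw [ha_def]; field_simp
    linarith
  have hself : ∀ y : E, ⟪f' y, y - y⟫ + g y + bregD K K' y y / ε = g y := by
    intro y; simp [bregD]
  have hne : ∀ y : E, (bregT f' g K K' ε y).Nonempty := by
    intro y
    have hcont : Continuous (fun z => ⟪f' y, z - y⟫ + g z + bregD K K' y z / ε) := by
      unfold bregD
      fun_prop
    have hcomp : IsCompact {z : E | f z + g z ≤ f y + g y} :=
      Metric.isCompact_of_isClosed_isBounded
        (isClosed_le (hfc.add hg) continuous_const) (hlevel _)
    obtain ⟨w, hw, hmin⟩ := hcomp.exists_isMinOn ⟨y, le_refl (f y + g y)⟩ hcont.continuousOn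
    refine ⟨w, fun z => ?_⟩
    by_cases hz : f z + g z ≤ f y + g y
    · exact hmin hz
    · push Not at hz
      have h1 := hmaj y z
      have h2 := isMinOn_iff.1 hmin y (show f y + g y ≤ f y + g y from le_refl _)
      simp only [hself y] at h2
      have h3 : 0 ≤ a * ‖z - y‖ ^ 2 := by positivity
      linarith
  set C := c₃ * (L + M / ε) with hC_def
  have hC : 0 < C := by positivity
  set B := (2 * ε * ν / (m - ε * L)) / (η / 2) ^ 2 with hB_def
  have hB' : B = ν / a / (η / 2) ^ 2 := by
    rw [hB_def, ha_def]
    have : m - ε * L ≠ 0 := by linarith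
    field_simp
  have hB : 0 < B := by rw [hB']; positivity
  set S := {z : E | f z + g z ≤ f xbar + g xbar} with hS
  have hxS : xbar ∈ S := le_refl (f xbar + g xbar)
  set θ := (2 ^ (max γ 1) * (η ^ (max γ 1 - γ) * C + η ^ (max γ 1 - 1))) with hθ_def
  have hθ : 0 < θ := by positivity
  refine ⟨B + 1, θ, by linarith, hθ, ?_⟩
  intro y hy hy1 hy2
  rw [← div_le_iff₀' hθ]
  refine (Metric.le_infDist (hne y)).2 ?_
  intro w hw
  rw [div_le_iff₀' hθ, dist_comm, dist_eq_norm]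
  have hdec : f w + g w + a * ‖w - y‖ ^ 2 ≤ f y + g y := by
    have h1 := hmaj y w
    have h2 := hw y
    rw [hself y] at h2
    linarith
  have hd0 := norm_nonneg (w - y)
  have haux : 0 ≤ a * ‖w - y‖ ^ 2 := by positivity
  have hνN : ν / (B + 1) ≤ ν := div_le_self hν.le (by linarith)
  have hξ : (f' w - f' y) - (1 / ε) • (K' w - K' y) ∈ proxSubdiff (fun z => f z + g z) w := by
    refine ⟨L / 2 + M / 2 / ε, by positivity, 1, one_pos, fun z _ => ?_⟩
    have h1 := hw z
    have h2 := hlow w z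
    have h3 : (bregD K K' y z - bregD K K' y w) / ε ≤
        (⟪K' w - K' y, z - w⟫ + M / 2 * ‖z - w‖ ^ 2) / ε := by
      apply div_le_div_of_nonneg_right _ hε.le
      have := hKdesc w z
      have e : ⟪K' y, z - y⟫ = ⟪K' y, z - w⟫ + ⟪K' y, w - y⟫ := by
        rw [← inner_add_right]; congr 1; abel
      unfold bregD
      rw [inner_sub_left]
      linarith
    have e : ⟪f' y, z - y⟫ = ⟪f' y, z - w⟫ + ⟪f' y, w - y⟫ := by
      rw [← inner_add_right]; congr 1; abel
    rw [sub_div] at h3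
    have e2 : (⟪K' w - K' y, z - w⟫ + M / 2 * ‖z - w‖ ^ 2) / ε =
      1 / ε * ⟪K' w - K' y, z - w⟫ + M / 2 / ε * ‖z - w‖ ^ 2 := by ring
    rw [e2] at h3
    rw [inner_sub_left, real_inner_smul_left, inner_sub_left (f' w)]
    simp only
    linarith
  have hξn : ‖(f' w - f' y) - (1 / ε) • (K' w - K' y)‖ ≤ (L + M / ε) * ‖w - y‖ := by
    refine (norm_sub_le _ _).trans ?_
    rw [norm_smul, Real.norm_of_nonneg (by positivity : (0:ℝ) ≤ 1 / ε)]
    have h1 := hlip w y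
    have h2 := mul_le_mul_of_nonneg_left (hKlip w y) (by positivity : (0:ℝ) ≤ 1 / ε)
    have e : 1 / ε * (M * ‖w - y‖) = M / ε * ‖w - y‖ := by ring
    rw [e] at h2
    linarith
  have hr0 : 0 ≤ Metric.infDist w S := Metric.infDist_nonneg
  have htri : Metric.infDist y S ≤ Metric.infDist w S + ‖w - y‖ := by
    have := Metric.infDist_le_infDist_add_dist (s := S) (x := y) (y := w)
    rwa [dist_comm, dist_eq_norm] at this
  by_cases hcase : f w + g w ≤ f xbar + g xbar
  · have hsη : Metric.infDist y S ≤ η := by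
      have := Metric.infDist_le_dist_of_mem (x := y) hxS
      rw [dist_eq_norm] at this
      linarith
    have hs0 : 0 ≤ Metric.infDist y S := Metric.infDist_nonneg
    have hsd : Metric.infDist y S ≤ ‖w - y‖ := by
      rw [Metric.infDist_zero_of_mem (show w ∈ S from hcase)] at htri
      linarith
    have := aux_real 0 (Metric.infDist y S) (Metric.infDist y S) η γ C le_rfl hs0 hs0 hη.le hsη hη
      hγ hC.le (by rw [Real.zero_rpow hγ.ne']; positivity) (by linarith)
    exact this.trans (mul_le_mul_of_nonneg_left hsd hθ.le)
  · push Not at hcase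
    have hdη : ‖w - y‖ < η / 2 := by
      have h1 : a * ‖w - y‖ ^ 2 < ν / (B + 1) := by linarith
      have h2 : ν / (B + 1) < a * (η / 2) ^ 2 := by
        rw [div_lt_iff₀ (by linarith)]
        have : a * (η / 2) ^ 2 * B = ν := by
          rw [hB']; field_simp
        have : 0 < a * (η / 2) ^ 2 := by positivity
        linarith
      have h3 : ‖w - y‖ ^ 2 < (η / 2) ^ 2 := lt_of_mul_lt_mul_left (h1.trans h2) ha.le
      exact lt_of_pow_lt_pow_left₀ 2 (by linarith) h3
    have hwη : ‖w - xbar‖ < η := by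
      have := norm_add_le (w - y) (y - xbar)
      rw [sub_add_sub_cancel] at this
      linarith
    have hrη : Metric.infDist w S ≤ η := by
      have := Metric.infDist_le_dist_of_mem (x := w) hxS
      rw [dist_eq_norm] at this
      linarith
    have hE := hEB w hwη hcase (by linarith) _ hξ
    have hE2 : Metric.infDist w S ^ γ ≤ C * ‖w - y‖ := by
      refine hE.trans ?_
      rw [hC_def, mul_assoc]
      exact mul_le_mul_of_nonneg_left hξn hc₃.le
    exact aux_real _ _ _ η γ C hr0 hd0 Metric.infDist_nonneg hrη (by linarith) hη hγ hC.le hE2 htri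
end
end
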